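/- (Alexandrov–Fenchel inequality in the plane.) Let A and B be convex polygons in the plane, i.e. convex hulls of nonempty finite subsets of ℝ². Then (area(A + B) − area(A) − area(B))² ≥ 4 · area(A) · area(B). Equivalently, the mixed area V(A,B) := (area(A+B) − area(A) − area(B))/2 satisfies V(A,B)² ≥ area(A) · area(B). -/

import Mathlib

open MeasureTheory
open scoped Pointwise

lemma bm1_compact {K L : Set ℝ} (hK : IsCompact K) (hL : IsCompact L) (hKn : K.Nonempty)
    (hLn : L.Nonempty) : volume K + volume L ≤ volume (K + L) := by
  obtain ⟨b, hb, hbm⟩ := hK.exists_isGreatest hKn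
  obtain ⟨c, hc, hcm⟩ := hL.exists_isLeast hLn
  have h1 : volume K = volume ((fun x => x + c) '' K) := by
    rw [Set.image_add_right, measure_preimage_add_right]
  have h2 : volume L = volume ((fun x => b + x) '' L) := by
    rw [Set.image_add_left, measure_preimage_add]
  have hm : MeasurableSet ((fun x => b + x) '' L) :=
    (hL.image (by fun_prop)).measurableSet
  rw [h1, h2, ← measure_union₀ hm.nullMeasurableSet]
  · apply measure_mono
    rintro z (⟨x, hx, rfl⟩ | ⟨x, hx, rfl⟩)
    · exact Set.add_mem_add hx hc
    · exact Set.add_mem_add hb hx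
  · refine measure_mono_null (t := {b + c}) ?_ (by simp)
    rintro z ⟨⟨x, hx, rfl⟩, ⟨y, hy, hxy⟩⟩
    have := hbm hx
    have := hcm hy
    simp only [Set.mem_singleton_iff] at *
    linarith

lemma bm1 {X Y : Set ℝ} (hX : MeasurableSet X) (hY : MeasurableSet Y) (hXn : X.Nonempty)
    (hYn : Y.Nonempty) : volume X + volume Y ≤ volume (X + Y) := by
  obtain ⟨x, hx⟩ := hXn
  obtain ⟨y, hy⟩ := hYn
  have key : ∀ K ⊆ X, IsCompact K → ∀ L ⊆ Y, IsCompact L →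
      volume K + volume L ≤ volume (X + Y) := by
    intro K hKX hK L hLY hL
    calc volume K + volume L ≤ volume (insert x K) + volume (insert y L) := by
          gcongr <;> exact Set.subset_insert _ _
      _ ≤ volume (insert x K + insert y L) :=
          bm1_compact (hK.insert x) (hL.insert y) (Set.insert_nonempty _ _)
            (Set.insert_nonempty _ _)
      _ ≤ _ := measure_mono (Set.add_subset_add (Set.insert_subset hx hKX)
            (Set.insert_subset hy hLY))
  refine le_of_forall_lt fun c hc => ?_
  by_cases hX0 : volume X = 0
  · rw [hX0, zero_add] at hc
    obtain ⟨L, hL, hLc, hl⟩ := hY.exists_lt_isCompact hc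
    exact (hl.trans_le le_add_self).trans_le (key ∅ (Set.empty_subset _) isCompact_empty L hL hLc)
  by_cases hY0 : volume Y = 0
  · rw [hY0, add_zero] at hc
    obtain ⟨K, hK, hKc, hk⟩ := hX.exists_lt_isCompact hc
    exact (hk.trans_le le_self_add).trans_le (key K hK hKc ∅ (Set.empty_subset _) isCompact_empty)
  obtain ⟨r, hr, s, hs, hrs⟩ := ENNReal.exists_lt_add_of_lt_add hc hX0 hY0
  obtain ⟨K, hK, hKc, hk⟩ := hX.exists_lt_isCompact hr
  obtain ⟨L, hL, hLc, hl⟩ := hY.exists_lt_isCompact hs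
  exact hrs.trans_le ((add_le_add hk.le hl.le).trans (key K hK hKc L hL hLc))

lemma level {f g h : ℝ → ℝ} (hf : Measurable f) (hg : Measurable g) (hh : Measurable h)
    (f0 : ∀ x, 0 ≤ f x) (g0 : ∀ x, 0 ≤ g x) (h0 : ∀ x, 0 ≤ h x)
    (hfg : ∀ x y, 0 < f x → 0 < g y → f x + g y ≤ h (x + y))
    {a b : ℝ} (ha : IsLUB (Set.range f) a) (hb : IsLUB (Set.range g) b)
    (a0 : 0 < a) (b0 : 0 < b) :
    (∫⁻ x, ENNReal.ofReal (f x / a)) + (∫⁻ x, ENNReal.ofReal (g x / b)) ≤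
      ∫⁻ x, ENNReal.ofReal (h x / (a + b)) := by
  rw [lintegral_eq_lintegral_meas_lt _ (.of_forall fun x => div_nonneg (f0 x) a0.le)
      (by fun_prop),
    lintegral_eq_lintegral_meas_lt _ (.of_forall fun x => div_nonneg (g0 x) b0.le) (by fun_prop),
    lintegral_eq_lintegral_meas_lt _ (.of_forall fun x => div_nonneg (h0 x) (by positivity))
      (by fun_prop)]
  rw [← lintegral_add_left']
  · refine setLIntegral_mono' measurableSet_Ioi ?_
    intro t (ht : 0 < t)
    by_cases h1 : t < 1
    · have e1 : {x | t < f x / a}.Nonempty := by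
        have : t * a < a := by nlinarith
        obtain ⟨_, ⟨x, rfl⟩, hx, _⟩ := ha.exists_between this
        exact ⟨x, by simpa [lt_div_iff₀ a0] using hx⟩
      have e2 : {x | t < g x / b}.Nonempty := by
        have : t * b < b := by nlinarith
        obtain ⟨_, ⟨x, rfl⟩, hx, _⟩ := hb.exists_between this
        exact ⟨x, by simpa [lt_div_iff₀ b0] using hx⟩
      refine (bm1 (measurableSet_lt measurable_const (by fun_prop))
        (measurableSet_lt measurable_const (by fun_prop)) e1 e2).trans (measure_mono ?_)
      rintro _ ⟨x, hx, y, hy, rfl⟩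
      simp only [Set.mem_setOf_eq] at *
      rw [lt_div_iff₀ (by positivity)] at *
      have := hfg x y (lt_trans (by positivity) hx) (lt_trans (by positivity) hy)
      linarith
    · have e1 : {x | t < f x / a} = ∅ := by
        ext x
        have := ha.1 ⟨x, rfl⟩
        simp [div_le_iff₀ a0]
        nlinarith
      have e2 : {x | t < g x / b} = ∅ := by
        ext x
        have := hb.1 ⟨x, rfl⟩
        simp [div_le_iff₀ b0]
        nlinarith
      simp [e1, e2]
  · refine (Antitone.measurable ?_).aemeasurable
    intro s t hst
    exact measure_mono fun x hx => lt_of_le_of_lt hst hx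

lemma slice_facts {A : Set (ℝ × ℝ)} (hA : IsCompact A) :
    ∃ C, ∀ x, volume (Prod.mk x ⁻¹' A) ≤ ENNReal.ofReal C := by
  obtain ⟨a, ha⟩ := (hA.image continuous_snd).isBounded.subset_closedBall 0
  refine ⟨2 * a, fun x => ?_⟩
  rw [← Real.volume_closedBall (0 : ℝ)]
  exact measure_mono fun y hy => ha ⟨_, hy, rfl⟩

lemma slice_int {A : Set (ℝ × ℝ)} (hA : IsCompact A) {a : ℝ} (ha : 0 < a) :
    ∫⁻ x, ENNReal.ofReal ((volume (Prod.mk x ⁻¹' A)).toReal / a) =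
      ENNReal.ofReal ((volume A).toReal / a) := by
  obtain ⟨C, hC⟩ := slice_facts hA
  have hm : Measurable fun x => volume (Prod.mk x ⁻¹' A) :=
    measurable_measure_prodMk_left hA.measurableSet
  rw [ENNReal.ofReal_div_of_pos ha, ENNReal.ofReal_toReal hA.measure_lt_top.ne,
    Measure.volume_eq_prod, Measure.prod_apply hA.measurableSet, div_eq_mul_inv,
    ← lintegral_mul_const _ hm]
  congr 1 with x
  rw [ENNReal.ofReal_div_of_pos ha, ENNReal.ofReal_toReal, div_eq_mul_inv]
  exact ((hC x).trans_lt ENNReal.ofReal_lt_top).ne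

lemma slice_lub {A : Set (ℝ × ℝ)} (hA : IsCompact A) (hpos : 0 < (volume A).toReal) :
    ∃ a, 0 < a ∧ IsLUB (Set.range fun x => (volume (Prod.mk x ⁻¹' A)).toReal) a := by
  obtain ⟨C, hC⟩ := slice_facts hA
  have hb : BddAbove (Set.range fun x => (volume (Prod.mk x ⁻¹' A)).toReal) := by
    refine ⟨(ENNReal.ofReal C).toReal, ?_⟩
    rintro _ ⟨x, rfl⟩
    exact ENNReal.toReal_mono ENNReal.ofReal_ne_top (hC x)
  have hl := isLUB_csSup (Set.range_nonempty _) hb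
  refine ⟨_, ?_, hl⟩
  by_contra hn
  have := slice_int hA one_pos
  have hz : ∀ x, (volume (Prod.mk x ⁻¹' A)).toReal = 0 := fun x =>
    le_antisymm ((hl.1 ⟨x, rfl⟩).trans (not_lt.1 hn)) ENNReal.toReal_nonneg
  simp only [hz] at this
  have h2 := ENNReal.ofReal_pos.2 (div_pos hpos one_pos)
  rw [← this] at h2
  simp at h2

lemma slice_add {A B : Set (ℝ × ℝ)} (hA : IsCompact A) (hB : IsCompact B) (x y : ℝ)
    (hx : 0 < (volume (Prod.mk x ⁻¹' A)).toReal) (hy : 0 < (volume (Prod.mk y ⁻¹' B)).toReal) :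
    (volume (Prod.mk x ⁻¹' A)).toReal + (volume (Prod.mk y ⁻¹' B)).toReal ≤
      (volume (Prod.mk (x + y) ⁻¹' (A + B))).toReal := by
  obtain ⟨C, hC⟩ := slice_facts (hA.add hB)
  rw [← ENNReal.toReal_add (ENNReal.toReal_pos_iff.1 hx).2.ne (ENNReal.toReal_pos_iff.1 hy).2.ne]
  apply ENNReal.toReal_mono ((hC _).trans_lt ENNReal.ofReal_lt_top).ne
  refine (bm1 (hA.measurableSet.preimage measurable_prodMk_left)
    (hB.measurableSet.preimage measurable_prodMk_left)
    (nonempty_of_measure_ne_zero (ENNReal.toReal_pos_iff.1 hx).1.ne')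
    (nonempty_of_measure_ne_zero (ENNReal.toReal_pos_iff.1 hy).1.ne')).trans (measure_mono ?_)
  rintro _ ⟨u, hu, v, hv, rfl⟩
  exact ⟨_, hu, _, hv, rfl⟩

lemma main_ineq {A B : Set (ℝ × ℝ)} (hA : IsCompact A) (hB : IsCompact B) :
    ((volume (A + B)).toReal - (volume A).toReal - (volume B).toReal) ^ 2 ≥
      4 * (volume A).toReal * (volume B).toReal := by
  rcases (ENNReal.toReal_nonneg (a := volume A)).eq_or_lt with h | hp
  · rw [← h]; simp; positivity
  rcases (ENNReal.toReal_nonneg (a := volume B)).eq_or_lt with h | hq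
  · rw [← h]; simp; positivity
  obtain ⟨a, a0, ha⟩ := slice_lub hA hp
  obtain ⟨b, b0, hb⟩ := slice_lub hB hq
  have key := level (measurable_measure_prodMk_left hA.measurableSet).ennreal_toReal
    (measurable_measure_prodMk_left hB.measurableSet).ennreal_toReal
    (measurable_measure_prodMk_left (hA.add hB).measurableSet).ennreal_toReal
    (fun _ => ENNReal.toReal_nonneg) (fun _ => ENNReal.toReal_nonneg)
    (fun _ => ENNReal.toReal_nonneg) (slice_add hA hB) ha hb a0 b0
  rw [slice_int hA a0, slice_int hB b0, slice_int (hA.add hB) (add_pos a0 b0),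
    ← ENNReal.ofReal_add (by positivity) (by positivity),
    ENNReal.ofReal_le_ofReal_iff (by positivity)] at key
  generalize (volume A).toReal = p at *
  generalize (volume B).toReal = q at *
  generalize (volume (A + B)).toReal = r at *
  rw [le_div_iff₀ (by positivity)] at key
  have e : (p / a + q / b) * (a + b) = p + q + (p * (b / a) + q * (a / b)) := by
    field_simp; ring
  have e2 : (p * (b / a)) * (q * (a / b)) = p * q := by field_simp
  have u0 : 0 < p * (b / a) := by positivity
  have v0 : 0 < q * (a / b) := by positivity
  generalize p * (b / a) = u at *
  generalize q * (a / b) = v at *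
  have : u + v ≤ r - p - q := by linarith
  nlinarith [sq_nonneg (u - v)]

/-- The Alexandrov–Fenchel inequality in the plane: for convex polygons `A, B ⊆ ℝ²`,
`(area(A+B) − area(A) − area(B))² ≥ 4·area(A)·area(B)`; equivalently the mixed area
`V(A,B) = (area(A+B) − area(A) − area(B))/2` satisfies `V(A,B)² ≥ area(A)·area(B)`. -/
theorem stmt_17 (S T : Set (ℝ × ℝ)) (hSfin : S.Finite) (hSne : S.Nonempty)
    (hTfin : T.Finite) (hTne : T.Nonempty) :
    ((volume (convexHull ℝ S + convexHull ℝ T)).toReal -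
        (volume (convexHull ℝ S)).toReal - (volume (convexHull ℝ T)).toReal) ^ 2 ≥
      4 * (volume (convexHull ℝ S)).toReal * (volume (convexHull ℝ T)).toReal ∧
    (((volume (convexHull ℝ S + convexHull ℝ T)).toReal -
        (volume (convexHull ℝ S)).toReal - (volume (convexHull ℝ T)).toReal) / 2) ^ 2 ≥
      (volume (convexHull ℝ S)).toReal * (volume (convexHull ℝ T)).toReal := by
  have h := main_ineq (hSfin.isCompact_convexHull ℝ) (hTfin.isCompact_convexHull ℝ)
  exact ⟨h, by nlinarith [h]⟩
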